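/- Let (T1, T2) be a pair of commuting contractions on a complex Hilbert space H with T = T1 T2. Then (T1, T2) has a strongly minimal Andô lift if and only if both factorizations T = T1·T2 and T = T2·T1 are regular, i.e. the set {D_{T1} T2 h ⊕ D_{T2} h : h ∈ H} is dense in 𝒟_{T1} ⊕ 𝒟_{T2} and the set {D_{T2} T1 h ⊕ D_{T1} h : h ∈ H} is dense in 𝒟_{T2} ⊕ 𝒟_{T1}. -/

import Mathlib

/-!
The product `V = V₁V₂` of a strongly minimal lift is the minimal isometric lift of `T = T₁T₂`, so
everything happens in the wandering space `Hᗮ ⊖ V Hᗮ` of `V` on `Hᗮ ⊆ K`.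

*Lift implies regularity* (`regular_of_lift`). For `h ∈ H`,
`(V - T)h = (V₁ - T₁)T₂h + V₁(V₂ - T₂)h`, where the two summands are orthogonal and have norms
`‖D₁T₂h‖` and `‖D₂h‖`. All vectors `(V₁ - T₁)a + V₁(V₂ - T₂)b` lie in `Hᗮ ⊖ V Hᗮ`. A vector of
`Hᗮ ⊖ V Hᗮ` orthogonal to `(V - T)H` is orthogonal to `H` and to `VK`, hence vanishes by strong
minimality; so `(V - T)H` is dense there, which is regularity of `T = T₁·T₂`. Exchanging the roles
of `V₁` and `V₂` gives the other factorization.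

*Regularity implies lift* (`hasStronglyMinimalAndoLift_of_dense`). Both `‖D₁T₂h‖² + ‖D₂h‖²` and
`‖D₁h‖² + ‖D₂T₁h‖²` equal `‖h‖² - ‖Th‖²`, so by regularity `(D₁T₂h, D₂h) ↦ (D₁h, D₂T₁h)` extends
to a unitary `U` of the direct sum of the defect spaces. On `K = H ⊕ ℓ²` of this sum put, with
`dₙ = (aₙ, bₙ)` and `U dₙ = (pₙ, qₙ)`,
`V₁(h, d) = (T₁h, (D₁h, q₀), (p₀, q₁), …)` and
`V₂(h, d) = (T₂h, U⁻¹(a₀, D₂h), U⁻¹(a₁, b₀), …)`. Both products are the Schäffer isometry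
`(h, d) ↦ (Th, (D₁T₂h, D₂h), d₀, d₁, …)`, for which `H` is cyclic by regularity.
-/

open ContinuousLinearMap

universe u

/-- `(Pi, V1, V2)` is an Andô lift of the commuting contractive pair `(T1, T2)`:
`Pi` is a linear isometric embedding, `(V1, V2)` is a commuting pair of isometries,
and `Vj* ∘ Pi = Pi ∘ Tj*` for `j = 1, 2`. -/
def IsAndoLift {H : Type u} {K : Type u}
    [NormedAddCommGroup H] [InnerProductSpace ℂ H] [CompleteSpace H]
    [NormedAddCommGroup K] [InnerProductSpace ℂ K] [CompleteSpace K]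
    (T1 T2 : H →L[ℂ] H) (Pi : H →L[ℂ] K) (V1 V2 : K →L[ℂ] K) : Prop :=
  (∀ h, ‖Pi h‖ = ‖h‖) ∧
  adjoint V1 ∘L V1 = 1 ∧ adjoint V2 ∘L V2 = 1 ∧
  V1 ∘L V2 = V2 ∘L V1 ∧
  adjoint V1 ∘L Pi = Pi ∘L adjoint T1 ∧
  adjoint V2 ∘L Pi = Pi ∘L adjoint T2

/-- Strong minimality of a lift: the span of `⋃ₙ (V1 V2)ⁿ (range Pi)` is dense. -/
def IsStronglyMinimalLift {H : Type u} {K : Type u}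
    [NormedAddCommGroup H] [InnerProductSpace ℂ H]
    [NormedAddCommGroup K] [InnerProductSpace ℂ K]
    (Pi : H →L[ℂ] K) (V1 V2 : K →L[ℂ] K) : Prop :=
  Dense (↑(Submodule.span ℂ
    (⋃ n : ℕ, ⇑((V1 ∘L V2) ^ n) '' Set.range ⇑Pi)) : Set K)

/-- `(T1, T2)` admits a strongly minimal Andô lift. -/
def HasStronglyMinimalAndoLift {H : Type u}
    [NormedAddCommGroup H] [InnerProductSpace ℂ H] [CompleteSpace H]
    (T1 T2 : H →L[ℂ] H) : Prop :=
  ∃ (K : Type u) (_ : NormedAddCommGroup K) (_ : InnerProductSpace ℂ K)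
    (_ : CompleteSpace K)
    (Pi : H →L[ℂ] K) (V1 V2 : K →L[ℂ] K),
    IsAndoLift T1 T2 Pi V1 V2 ∧ IsStronglyMinimalLift Pi V1 V2


/-! ### The coordinate model `H ⊕ ℓ²(E)` -/

section Model

variable {H E : Type u}
  [NormedAddCommGroup H] [InnerProductSpace ℂ H]
  [NormedAddCommGroup E]

/-- The Hilbert space `H ⊕ ℓ²(ℕ, E)` carrying the lift. -/
abbrev LiftSpace (H E : Type u) [NormedAddCommGroup H] [InnerProductSpace ℂ H]
    [NormedAddCommGroup E] [InnerProductSpace ℂ E] : Type u :=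
  WithLp 2 (H × lp (fun _ : ℕ => E) 2)

lemma prodL2_ext {X Y : Type*} {x y : WithLp 2 (X × Y)} (h1 : x.fst = y.fst)
    (h2 : x.snd = y.snd) : x = y :=
  (WithLp.equiv 2 _).injective (Prod.ext h1 h2)

lemma hasSum_norm_sq_lp (d : lp (fun _ : ℕ => E) 2) :
    HasSum (fun n => ‖d n‖ ^ 2) (‖d‖ ^ 2) := by
  have := lp.hasSum_norm (p := 2) (by norm_num) d
  simpa using this

lemma memℓp_two_of_hasSum {x : ℕ → E} {r : ℝ} (hx : HasSum (fun n => ‖x n‖ ^ 2) r) :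
    Memℓp (E := fun _ : ℕ => E) x 2 := by
  apply memℓp_gen
  simpa using hx.summable

variable [InnerProductSpace ℂ E]

/-- A coordinatewise linear prescription `k ↦ (T k.fst, c k)` whose coordinates have the
right square sum defines an isometry of the model space. -/
lemma exists_isometry_of_coords (T : H →L[ℂ] H) (c : LiftSpace H E →ₗ[ℂ] (ℕ → E))
    (hs : ∀ k, HasSum (fun n => ‖c k n‖ ^ 2) (‖k‖ ^ 2 - ‖T k.fst‖ ^ 2)) :
    ∃ V : LiftSpace H E →L[ℂ] LiftSpace H E,
      (∀ k, ‖V k‖ = ‖k‖) ∧ (∀ k, (V k).fst = T k.fst) ∧ ∀ k n, (V k).snd n = c k n := by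
  let L : LiftSpace H E →ₗ[ℂ] LiftSpace H E :=
    { toFun := fun k => WithLp.toLp 2 (T k.fst, ⟨c k, memℓp_two_of_hasSum (hs k)⟩)
      map_add' := by
        intro x y
        apply (WithLp.equiv 2 _).injective
        refine Prod.ext ?_ (lp.ext ?_)
        · simp
        · change c (x + y) = c x + c y
          simp
      map_smul' := by
        intro a x
        apply (WithLp.equiv 2 _).injective
        refine Prod.ext ?_ (lp.ext ?_)
        · simp
        · change c (a • x) = a • c x
          simp }
  have hL : ∀ k, ‖L k‖ = ‖k‖ := by
    intro k
    have h := WithLp.prod_norm_sq_eq_of_L2 (L k)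
    have h2 := (hasSum_norm_sq_lp (L k).snd).unique (hs k)
    have h3 : (L k).fst = T k.fst := rfl
    rw [h2, h3] at h
    have : ‖L k‖ ^ 2 = ‖k‖ ^ 2 := by linarith
    exact (sq_eq_sq₀ (norm_nonneg _) (norm_nonneg _)).1 this
  exact ⟨(⟨L, hL⟩ : LiftSpace H E →ₗᵢ[ℂ] LiftSpace H E).toContinuousLinearMap, hL,
    fun _ => rfl, fun _ _ => rfl⟩

lemma hasSum_cons {f : ℕ → ℝ} {r : ℝ} (a : ℝ) (hf : HasSum f r) :
    HasSum (fun n => Nat.casesOn (motive := fun _ => ℝ) n a f) (a + r) := by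
  rw [← hasSum_nat_add_iff' 1]
  simpa using hf

lemma LiftSpace.ext {x y : LiftSpace H E} (h1 : x.fst = y.fst)
    (h2 : ∀ n, x.snd n = y.snd n) : x = y :=
  prodL2_ext h1 (lp.ext (funext h2))

/-- The embedding `h ↦ (h, 0)`. -/
noncomputable def inclusion : H →L[ℂ] LiftSpace H E :=
  (WithLp.prodContinuousLinearEquiv 2 ℂ H _).symm.toContinuousLinearMap ∘L
    ContinuousLinearMap.inl ℂ H _

lemma inclusion_apply (h : H) : (inclusion h : LiftSpace H E) = WithLp.toLp 2 (h, 0) := rfl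

lemma norm_inclusion (h : H) : ‖(inclusion h : LiftSpace H E)‖ = ‖h‖ := by
  refine (sq_eq_sq₀ (norm_nonneg _) (norm_nonneg _)).1 ?_
  rw [WithLp.prod_norm_sq_eq_of_L2, inclusion_apply]
  simp

lemma adjoint_comp_inclusion [CompleteSpace H] [CompleteSpace E]
    (S : H →L[ℂ] H) (V : LiftSpace H E →L[ℂ] LiftSpace H E)
    (hV : ∀ k, (V k).fst = S k.fst) :
    adjoint V ∘L (inclusion : H →L[ℂ] LiftSpace H E) =
      (inclusion : H →L[ℂ] LiftSpace H E) ∘L adjoint S := by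
  ext1 h
  refine ext_inner_right ℂ fun k => ?_
  simp only [ContinuousLinearMap.comp_apply, adjoint_inner_left]
  rw [WithLp.prod_inner_apply, WithLp.prod_inner_apply]
  change inner ℂ h (V k).fst + inner ℂ (0 : lp (fun _ : ℕ => E) 2) _ =
    inner ℂ (adjoint S h) k.fst + inner ℂ (0 : lp (fun _ : ℕ => E) 2) _
  rw [hV, adjoint_inner_left, inner_zero_left, inner_zero_left]

/-- If `V₁V₂` acts as `(h, d₀, d₁, …) ↦ (T h, F h, d₀, d₁, …)` with `F` of dense range, then
the copy of `H` is cyclic for `V₁V₂`. -/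
lemma isStronglyMinimalLift_of_coords [CompleteSpace H] [CompleteSpace E]
    (F : H →ₗ[ℂ] E) (hF : DenseRange F) (V1 V2 : LiftSpace H E →L[ℂ] LiftSpace H E)
    (T : H →L[ℂ] H) (hVf : ∀ k, ((V1 ∘L V2) k).fst = T k.fst)
    (hVz : ∀ k, ((V1 ∘L V2) k).snd 0 = F k.fst)
    (hVs : ∀ k n, ((V1 ∘L V2) k).snd (n + 1) = k.snd n) :
    IsStronglyMinimalLift (inclusion : H →L[ℂ] LiftSpace H E) V1 V2 := by
  rw [IsStronglyMinimalLift, Submodule.dense_iff_topologicalClosure_eq_top,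
    Submodule.topologicalClosure_eq_top_iff, Submodule.eq_bot_iff]
  generalize V1 ∘L V2 = V at *
  intro y hy
  have hy' : ∀ n h, inner ℂ ((V ^ n) (inclusion h)) y = 0 := fun n h =>
    (Submodule.mem_orthogonal _ _).1 hy _ (Submodule.subset_span
      (Set.mem_iUnion.2 ⟨n, _, ⟨h, rfl⟩, rfl⟩))
  have hfst : ∀ y : LiftSpace H (E),
      (∀ n h, inner ℂ ((V ^ n) (inclusion h)) y = 0) → y.fst = 0 := by
    intro y hy
    have := hy 0 y.fst
    rw [WithLp.prod_inner_apply] at this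
    simpa [inclusion_apply] using this
  -- Applying `V*` shifts the `ℓ²`-coordinates down and preserves the orthogonality.
  have hsnd : ∀ n, ∀ y : LiftSpace H (E),
      (∀ n h, inner ℂ ((V ^ n) (inclusion h)) y = 0) → y.snd n = 0 := by
    intro n
    induction n with
    | zero =>
      intro y hy
      have h0 := hfst y hy
      have horth : ∀ x ∈ Set.range F, inner ℂ x (y.snd 0) = 0 := by
        rintro _ ⟨h, rfl⟩
        have h1 := hy 1 h
        have h2 : (V (inclusion h)).snd = lp.single 2 0 (F h) := by
          refine lp.ext (funext fun n => ?_)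
          cases n with
          | zero => rw [hVz]; simp [inclusion_apply]
          | succ n => rw [hVs]; simp [inclusion_apply]
        rw [pow_one, WithLp.prod_inner_apply] at h1
        change inner ℂ (V (inclusion h)).fst y.fst + inner ℂ (V (inclusion h)).snd y.snd = 0 at h1
        rw [h2, h0, lp.inner_single_left] at h1
        simpa using h1
      have hcl : ∀ x, inner ℂ x (y.snd 0) = 0 := fun x =>
        hF.induction (P := fun x => inner ℂ x (y.snd 0) = 0) horth
          (isClosed_eq (by fun_prop) continuous_const) x
      exact inner_self_eq_zero.1 (hcl _)
    | succ n ih =>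
      intro y hy
      have hn := ih (adjoint V y) (fun m h => by
        rw [adjoint_inner_right, ← mul_apply_eq_comp, ← pow_succ']
        exact hy _ h)
      have hin : ∀ x, inner ℂ x (y.snd (n + 1)) = 0 := by
        intro x
        let k : LiftSpace H (E) := WithLp.toLp 2 (0, lp.single 2 n x)
        have h2 : (V k).snd = lp.single 2 (n + 1) x := by
          refine lp.ext (funext fun m => ?_)
          cases m with
          | zero => rw [hVz]; simp [k]
          | succ m =>
            rw [hVs]
            by_cases hmn : m = n
            · subst hmn; simp [k]
            · simp [k, hmn]
        have h3 : inner ℂ k (adjoint V y) = inner ℂ (V k) y := adjoint_inner_right _ _ _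
        rw [WithLp.prod_inner_apply, WithLp.prod_inner_apply] at h3
        change inner ℂ (0 : H) _ + inner ℂ (lp.single 2 n x) (adjoint V y).snd =
          inner ℂ (V k).fst y.fst + inner ℂ (V k).snd y.snd at h3
        rw [h2, hVf, lp.inner_single_left, lp.inner_single_left, hn] at h3
        simpa [k] using h3.symm
      exact inner_self_eq_zero.1 (hin _)
  exact LiftSpace.ext (hfst y hy') (fun n => hsnd n y hy')

end Model

/-! ### Regularity produces a lift -/

section Construction

variable {H A B : Type u}
  [NormedAddCommGroup H] [InnerProductSpace ℂ H]
  [NormedAddCommGroup A] [InnerProductSpace ℂ A]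
  [NormedAddCommGroup B] [InnerProductSpace ℂ B]

/-- The `ℓ²`-part of `V₁(h, d) = (T₁ h, (α h, q₀), (p₀, q₁), (p₁, q₂), …)`, where
`(pₙ, qₙ) = U dₙ`. -/
noncomputable def coordsOne (α : H →L[ℂ] A) (U : WithLp 2 (A × B) ≃ₗᵢ[ℂ] WithLp 2 (A × B)) :
    LiftSpace H (WithLp 2 (A × B)) →ₗ[ℂ] (ℕ → WithLp 2 (A × B)) where
  toFun k n := WithLp.toLp 2
    (Nat.casesOn (motive := fun _ => A) n (α k.fst) fun m => (U (k.snd m)).fst, (U (k.snd n)).snd)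
  map_add' x y := by
    funext n
    apply prodL2_ext <;> cases n <;> simp
  map_smul' a x := by
    funext n
    apply prodL2_ext <;> cases n <;> simp

/-- The `ℓ²`-part of `V₂(h, d) = (T₂ h, U⁻¹(a₀, β h), U⁻¹(a₁, b₀), U⁻¹(a₂, b₁), …)`, where
`(aₙ, bₙ) = dₙ`. -/
noncomputable def coordsTwo (β : H →L[ℂ] B) (U : WithLp 2 (A × B) ≃ₗᵢ[ℂ] WithLp 2 (A × B)) :
    LiftSpace H (WithLp 2 (A × B)) →ₗ[ℂ] (ℕ → WithLp 2 (A × B)) where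
  toFun k n := U.symm (WithLp.toLp 2
    ((k.snd n).fst, Nat.casesOn (motive := fun _ => B) n (β k.fst) fun m => (k.snd m).snd))
  map_add' x y := by
    funext n
    apply U.injective
    simp only [Pi.add_apply, map_add, LinearIsometryEquiv.apply_symm_apply]
    apply prodL2_ext <;> cases n <;> simp
  map_smul' a x := by
    funext n
    apply U.injective
    simp only [Pi.smul_apply, map_smul, LinearIsometryEquiv.apply_symm_apply]
    apply prodL2_ext <;> cases n <;> simp

lemma hasSum_coordsOne (T : H →L[ℂ] H) (α : H →L[ℂ] A)
    (hα : ∀ h, ‖α h‖ ^ 2 = ‖h‖ ^ 2 - ‖T h‖ ^ 2)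
    (U : WithLp 2 (A × B) ≃ₗᵢ[ℂ] WithLp 2 (A × B)) (k : LiftSpace H (WithLp 2 (A × B))) :
    HasSum (fun n => ‖coordsOne α U k n‖ ^ 2) (‖k‖ ^ 2 - ‖T k.fst‖ ^ 2) := by
  have hd := hasSum_norm_sq_lp k.snd
  have hsplit : ∀ n, ‖k.snd n‖ ^ 2 = ‖(U (k.snd n)).fst‖ ^ 2 + ‖(U (k.snd n)).snd‖ ^ 2 := by
    intro n
    rw [← WithLp.prod_norm_sq_eq_of_L2, U.norm_map]
  have hp : Summable fun n => ‖(U (k.snd n)).fst‖ ^ 2 :=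
    hd.summable.of_nonneg_of_le (fun _ => by positivity)
      (fun n => by rw [hsplit]; nlinarith [sq_nonneg ‖(U (k.snd n)).snd‖])
  have hq : Summable fun n => ‖(U (k.snd n)).snd‖ ^ 2 :=
    hd.summable.of_nonneg_of_le (fun _ => by positivity)
      (fun n => by rw [hsplit]; nlinarith [sq_nonneg ‖(U (k.snd n)).fst‖])
  have htot := (hp.hasSum.add hq.hasSum).unique (by simpa only [hsplit] using hd)
  have key := (hasSum_cons (‖α k.fst‖ ^ 2) hp.hasSum).add hq.hasSum
  convert key using 1
  · funext n
    rw [WithLp.prod_norm_sq_eq_of_L2]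
    cases n <;> simp [coordsOne]
  · rw [WithLp.prod_norm_sq_eq_of_L2, hα, add_assoc, htot]; ring

lemma hasSum_coordsTwo (T : H →L[ℂ] H) (β : H →L[ℂ] B)
    (hβ : ∀ h, ‖β h‖ ^ 2 = ‖h‖ ^ 2 - ‖T h‖ ^ 2)
    (U : WithLp 2 (A × B) ≃ₗᵢ[ℂ] WithLp 2 (A × B)) (k : LiftSpace H (WithLp 2 (A × B))) :
    HasSum (fun n => ‖coordsTwo β U k n‖ ^ 2) (‖k‖ ^ 2 - ‖T k.fst‖ ^ 2) := by
  have hd := hasSum_norm_sq_lp k.snd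
  have hsplit : ∀ n, ‖k.snd n‖ ^ 2 = ‖(k.snd n).fst‖ ^ 2 + ‖(k.snd n).snd‖ ^ 2 :=
    fun n => WithLp.prod_norm_sq_eq_of_L2 _
  have hp : Summable fun n => ‖(k.snd n).fst‖ ^ 2 :=
    hd.summable.of_nonneg_of_le (fun _ => by positivity)
      (fun n => by rw [hsplit]; nlinarith [sq_nonneg ‖(k.snd n).snd‖])
  have hq : Summable fun n => ‖(k.snd n).snd‖ ^ 2 :=
    hd.summable.of_nonneg_of_le (fun _ => by positivity)
      (fun n => by rw [hsplit]; nlinarith [sq_nonneg ‖(k.snd n).fst‖])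
  have htot := (hp.hasSum.add hq.hasSum).unique (by simpa only [hsplit] using hd)
  have key := hp.hasSum.add (hasSum_cons (‖β k.fst‖ ^ 2) hq.hasSum)
  convert key using 1
  · funext n
    simp only [coordsTwo, LinearMap.coe_mk, AddHom.coe_mk, LinearIsometryEquiv.norm_map]
    rw [WithLp.prod_norm_sq_eq_of_L2]
    cases n <;> simp
  · rw [WithLp.prod_norm_sq_eq_of_L2, hβ, add_left_comm, htot]; ring

/-- Two maps of dense range with equal norms differ by a unitary. -/
lemma exists_unitary_of_norm_eq {E : Type u} [NormedAddCommGroup E] [InnerProductSpace ℂ E]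
    [CompleteSpace E] (F G : H →ₗ[ℂ] E) (hF : DenseRange F) (hG : DenseRange G)
    (hFG : ∀ h, ‖G h‖ = ‖F h‖) : ∃ U : E ≃ₗᵢ[ℂ] E, ∀ h, U (F h) = G h :=
  ⟨(LinearEquiv.refl ℂ H).extendOfIsometry F G hF hG hFG,
    fun h => LinearEquiv.extendOfIsometry_eq _ _ _ hF hG hFG h⟩

/-- The map `h ↦ γ h ⊕ δ h` into the Hilbert direct sum. -/
noncomputable def pairMap (γ : H →L[ℂ] A) (δ : H →L[ℂ] B) : H →ₗ[ℂ] WithLp 2 (A × B) :=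
  ((WithLp.prodContinuousLinearEquiv 2 ℂ A B).symm.toContinuousLinearMap ∘L
    (γ.prod δ)).toLinearMap

lemma pairMap_apply (γ : H →L[ℂ] A) (δ : H →L[ℂ] B) (h : H) :
    pairMap γ δ h = WithLp.toLp 2 (γ h, δ h) := rfl

lemma norm_sq_pairMap (γ : H →L[ℂ] A) (δ : H →L[ℂ] B) (h : H) :
    ‖pairMap γ δ h‖ ^ 2 = ‖γ h‖ ^ 2 + ‖δ h‖ ^ 2 :=
  WithLp.prod_norm_sq_eq_of_L2 _

lemma denseRange_pairMap (γ : H →L[ℂ] A) (δ : H →L[ℂ] B)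
    (hd : DenseRange fun h : H => (γ h, δ h)) : DenseRange (pairMap γ δ) :=
  (WithLp.prodContinuousLinearEquiv 2 ℂ A B).symm.surjective.denseRange.comp hd
    (WithLp.prodContinuousLinearEquiv 2 ℂ A B).symm.continuous

variable [CompleteSpace H] [CompleteSpace A] [CompleteSpace B]

/-- Andô's construction. Regularity of both factorizations makes
`(α T₂ h, β h) ↦ (α h, β T₁ h)` extend to a unitary `U` of `A ⊕ B`, which interlaces the two
shifts on `H ⊕ ℓ²(A ⊕ B)`; regularity of the first factorization gives strong minimality. -/
lemma hasStronglyMinimalAndoLift_of_dense (T1 T2 : H →L[ℂ] H) (hc : T1 ∘L T2 = T2 ∘L T1)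
    (α : H →L[ℂ] A) (β : H →L[ℂ] B)
    (hα : ∀ h, ‖α h‖ ^ 2 = ‖h‖ ^ 2 - ‖T1 h‖ ^ 2)
    (hβ : ∀ h, ‖β h‖ ^ 2 = ‖h‖ ^ 2 - ‖T2 h‖ ^ 2)
    (hd1 : DenseRange fun h : H => (α (T2 h), β h))
    (hd2 : DenseRange fun h : H => (α h, β (T1 h))) :
    HasStronglyMinimalAndoLift T1 T2 := by
  have hc' : ∀ h, T1 (T2 h) = T2 (T1 h) := fun h => congrArg (fun f => f h) hc
  have hF := denseRange_pairMap (α ∘L T2) β hd1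
  have hG := denseRange_pairMap α (β ∘L T1) hd2
  obtain ⟨U, hU⟩ := exists_unitary_of_norm_eq _ _ hF hG (fun h => by
    refine (sq_eq_sq₀ (norm_nonneg _) (norm_nonneg _)).1 ?_
    rw [norm_sq_pairMap, norm_sq_pairMap]
    simp only [ContinuousLinearMap.comp_apply, hα, hβ, hc']
    ring)
  obtain ⟨V1, hV1n, hV1f, hV1s⟩ := exists_isometry_of_coords T1 (coordsOne α U)
    (hasSum_coordsOne T1 α hα U)
  obtain ⟨V2, hV2n, hV2f, hV2s⟩ := exists_isometry_of_coords T2 (coordsTwo β U)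
    (hasSum_coordsTwo T2 β hβ U)
  -- Both products equal the Schäffer isometry
  -- `(h, d₀, d₁, …) ↦ (T h, (α T₂ h, β h), d₀, d₁, …)`.
  have h12z : ∀ k, (V1 (V2 k)).snd 0 = pairMap (α ∘L T2) β k.fst := by
    intro k
    rw [hV1s, pairMap_apply]
    simp [coordsOne, hV2s, coordsTwo, hV2f]
  have h12s : ∀ k n, (V1 (V2 k)).snd (n + 1) = k.snd n := by
    intro k n
    rw [hV1s]
    apply prodL2_ext <;> simp [coordsOne, hV2s, coordsTwo]
  have h21z : ∀ k, (V2 (V1 k)).snd 0 = pairMap (α ∘L T2) β k.fst := by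
    intro k
    rw [hV2s]
    apply U.injective
    rw [hU, pairMap_apply]
    simp [coordsOne, hV1s, coordsTwo, hV1f]
  have h21s : ∀ k n, (V2 (V1 k)).snd (n + 1) = k.snd n := by
    intro k n
    rw [hV2s]
    apply U.injective
    apply prodL2_ext <;> simp [coordsOne, hV1s, coordsTwo]
  refine ⟨LiftSpace H (WithLp 2 (A × B)), inferInstance, inferInstance, inferInstance,
    inclusion, V1, V2, ⟨norm_inclusion, ?_, ?_, ?_, adjoint_comp_inclusion T1 V1 hV1f,
      adjoint_comp_inclusion T2 V2 hV2f⟩, ?_⟩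
  · exact V1.norm_map_iff_adjoint_comp_self.1 hV1n
  · exact V2.norm_map_iff_adjoint_comp_self.1 hV2n
  · ext1 k
    refine LiftSpace.ext ?_ ?_
    · simp [hV1f, hV2f, hc']
    · rintro (_ | n)
      · exact (h12z k).trans (h21z k).symm
      · exact (h12s k n).trans (h21s k n).symm
  · exact isStronglyMinimalLift_of_coords _ hF V1 V2 (T1 ∘L T2)
      (fun k => (hV1f _).trans (congrArg T1 (hV2f k))) h12z h12s

end Construction

/-! ### A strongly minimal lift forces regularity -/

section Regularity

variable {H K : Type u}
  [NormedAddCommGroup H] [InnerProductSpace ℂ H] [CompleteSpace H]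
  [NormedAddCommGroup K] [InnerProductSpace ℂ K] [CompleteSpace K]

lemma norm_sq_defect (T D : H →L[ℂ] H) (hpos : D.IsPositive)
    (hsq : D ∘L D = 1 - adjoint T ∘L T) (h : H) : ‖D h‖ ^ 2 = ‖h‖ ^ 2 - ‖T h‖ ^ 2 := by
  have hD : adjoint D = D := hpos.isSelfAdjoint.adjoint_eq
  have e1 : inner ℂ (D h) (D h) = inner ℂ h h - inner ℂ (T h) (T h) := by
    have : D (D h) = h - adjoint T (T h) := congrArg (fun f => f h) hsq
    rw [← adjoint_inner_right, hD, this, inner_sub_right, adjoint_inner_right]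
  simp only [inner_self_eq_norm_sq_to_K] at e1
  exact_mod_cast e1

lemma IsAndoLift.symm {T1 T2 : H →L[ℂ] H} {Pi : H →L[ℂ] K} {V1 V2 : K →L[ℂ] K}
    (hl : IsAndoLift T1 T2 Pi V1 V2) : IsAndoLift T2 T1 Pi V2 V1 :=
  ⟨hl.1, hl.2.2.1, hl.2.1, hl.2.2.2.1.symm, hl.2.2.2.2.2, hl.2.2.2.2.1⟩

/-- The defect of an intertwining isometry, `(V - T)h` with `H` viewed inside `K`. -/
noncomputable def defectMap (T : H →L[ℂ] H) (Pi : H →L[ℂ] K) (V : K →L[ℂ] K) : H →L[ℂ] K :=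
  V ∘L Pi - Pi ∘L T

lemma defectMap_apply (T : H →L[ℂ] H) (Pi : H →L[ℂ] K) (V : K →L[ℂ] K) (h : H) :
    defectMap T Pi V h = V (Pi h) - Pi (T h) := rfl

section Defect

variable {T : H →L[ℂ] H} {Pi : H →L[ℂ] K} {V : K →L[ℂ] K}

lemma adjoint_apply_lift (hV : adjoint V ∘L Pi = Pi ∘L adjoint T) (k : K) :
    adjoint Pi (V k) = T (adjoint Pi k) := by
  have := congrArg adjoint hV
  rw [adjoint_comp, adjoint_comp, adjoint_adjoint, adjoint_adjoint] at this
  exact congrArg (fun f => f k) this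

lemma adjoint_defectMap (hPi : adjoint Pi ∘L Pi = 1) (hV : adjoint V ∘L Pi = Pi ∘L adjoint T)
    (h : H) : adjoint Pi (defectMap T Pi V h) = 0 := by
  have hP : ∀ h, adjoint Pi (Pi h) = h := fun h => congrArg (fun f => f h) hPi
  rw [defectMap_apply, map_sub, adjoint_apply_lift hV, hP, hP, sub_self]

/-- The defect lands in the wandering space `Hᗮ ⊖ V Hᗮ`. -/
lemma inner_defectMap_of_adjoint_eq_zero (hV1 : adjoint V ∘L V = 1)
    (hV : adjoint V ∘L Pi = Pi ∘L adjoint T) (h : H) {e : K} (he : adjoint Pi e = 0) :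
    inner ℂ (V e) (defectMap T Pi V h) = 0 := by
  have hVV : ∀ k, adjoint V (V k) = k := fun k => congrArg (fun f => f k) hV1
  rw [defectMap_apply, inner_sub_right, ← adjoint_inner_right, hVV, ← adjoint_inner_left Pi,
    ← adjoint_inner_left Pi, adjoint_apply_lift hV, he]
  simp

lemma norm_sq_defectMap (hPi : adjoint Pi ∘L Pi = 1) (hV1 : adjoint V ∘L V = 1)
    (hV : adjoint V ∘L Pi = Pi ∘L adjoint T) (h : H) :
    ‖defectMap T Pi V h‖ ^ 2 = ‖h‖ ^ 2 - ‖T h‖ ^ 2 := by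
  have hs : V (Pi h) = Pi (T h) + defectMap T Pi V h := by rw [defectMap_apply]; abel
  have ho : inner ℂ (Pi (T h)) (defectMap T Pi V h) = 0 := by
    rw [← adjoint_inner_right, adjoint_defectMap hPi hV, inner_zero_right]
  have hn := norm_add_sq_eq_norm_sq_add_norm_sq_of_inner_eq_zero _ _ ho
  rw [← hs, V.norm_map_iff_adjoint_comp_self.2 hV1, Pi.norm_map_iff_adjoint_comp_self.2 hPi,
    Pi.norm_map_iff_adjoint_comp_self.2 hPi] at hn
  nlinarith

end Defect

/-- With `Lᵢ = (Vᵢ - Tᵢ)H`, one has `(V₁V₂ - T₁T₂)h = (V₁ - T₁)T₂h + V₁(V₂ - T₂)h`, an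
orthogonal decomposition. Strong minimality makes the left-hand sides dense in
`Hᗮ ⊖ V₁V₂Hᗮ`, which contains `L₁ ⊕ V₁L₂`. -/
lemma regular_of_lift {T1 T2 D1 D2 : H →L[ℂ] H}
    (hD1 : ∀ h, ‖D1 h‖ ^ 2 = ‖h‖ ^ 2 - ‖T1 h‖ ^ 2)
    (hD2 : ∀ h, ‖D2 h‖ ^ 2 = ‖h‖ ^ 2 - ‖T2 h‖ ^ 2)
    {Pi : H →L[ℂ] K} {V1 V2 : K →L[ℂ] K} (hl : IsAndoLift T1 T2 Pi V1 V2)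
    (hm : IsStronglyMinimalLift Pi V1 V2) :
    closure (Set.range fun h : H => (D1 (T2 h), D2 h)) =
      closure (Set.range ⇑D1) ×ˢ closure (Set.range ⇑D2) := by
  obtain ⟨hPin, hV1, hV2, -, hi1, hi2⟩ := hl
  have hPi := Pi.norm_map_iff_adjoint_comp_self.1 hPin
  have hP : ∀ h, adjoint Pi (Pi h) = h := fun h => congrArg (fun f => f h) hPi
  have hV1V1 : ∀ k, adjoint V1 (V1 k) = k := fun k => congrArg (fun f => f k) hV1
  have hV1n := V1.norm_map_iff_adjoint_comp_self.2 hV1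
  set Δ1 := defectMap T1 Pi V1 with hΔ1
  set Δ2 := defectMap T2 Pi V2 with hΔ2
  have hxP : ∀ a b, adjoint Pi (Δ1 a + V1 (Δ2 b)) = 0 := by
    intro a b
    rw [map_add, adjoint_defectMap hPi hi1, adjoint_apply_lift hi1, adjoint_defectMap hPi hi2]
    simp
  have hxV : ∀ a b e, adjoint Pi e = 0 → inner ℂ (V1 (V2 e)) (Δ1 a + V1 (Δ2 b)) = 0 := by
    intro a b e he
    have he2 : adjoint Pi (V2 e) = 0 := by rw [adjoint_apply_lift hi2, he, map_zero]
    rw [inner_add_right, inner_defectMap_of_adjoint_eq_zero hV1 hi1 a he2,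
      ← adjoint_inner_left V1, hV1V1, inner_defectMap_of_adjoint_eq_zero hV2 hi2 b he, add_zero]
  have hxn : ∀ a b, ‖Δ1 a + V1 (Δ2 b)‖ ^ 2 = ‖D1 a‖ ^ 2 + ‖D2 b‖ ^ 2 := by
    intro a b
    have ho : inner ℂ (Δ1 a) (V1 (Δ2 b)) = 0 :=
      inner_eq_zero_symm.1 (inner_defectMap_of_adjoint_eq_zero hV1 hi1 a
        (adjoint_defectMap hPi hi2 b))
    have hn := norm_add_sq_eq_norm_sq_add_norm_sq_of_inner_eq_zero _ _ ho
    have h1 := norm_sq_defectMap hPi hV1 hi1 a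
    have h2 := norm_sq_defectMap hPi hV2 hi2 b
    rw [hV1n] at hn
    rw [hD1, hD2, ← h1, ← h2]
    nlinarith
  let Λ : H →ₗ[ℂ] K := (Δ1 ∘L T2 + V1 ∘L Δ2).toLinearMap
  have hΛ : ∀ h, Λ h = Δ1 (T2 h) + V1 (Δ2 h) := fun _ => rfl
  have hΛ' : ∀ h, Λ h = V1 (V2 (Pi h)) - Pi (T1 (T2 h)) := by
    intro h
    rw [hΛ, hΔ1, hΔ2, defectMap_apply, defectMap_apply, map_sub]
    abel
  have hclos : ∀ a b, Δ1 a + V1 (Δ2 b) ∈ (LinearMap.range Λ).topologicalClosure := by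
    intro a b
    set L := (LinearMap.range Λ).topologicalClosure with hL
    have : CompleteSpace L := (LinearMap.range Λ).isClosed_topologicalClosure.completeSpace_coe
    obtain ⟨p, hp, y, hy, hxy⟩ := L.exists_add_mem_mem_orthogonal (Δ1 a + V1 (Δ2 b))
    have hyx : y = (Δ1 a + V1 (Δ2 b)) - p := by rw [hxy]; abel
    have hpP : adjoint Pi p = 0 := by
      have : L ≤ LinearMap.ker (adjoint Pi).toLinearMap := by
        refine Submodule.topologicalClosure_minimal _ ?_ (adjoint Pi).isClosed_ker
        rintro _ ⟨h, rfl⟩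
        exact hxP _ _
      exact this hp
    have hpV : ∀ e, adjoint Pi e = 0 → inner ℂ (V1 (V2 e)) p = 0 := by
      intro e he
      have : L ≤ (Submodule.span ℂ {V1 (V2 e)})ᗮ := by
        refine Submodule.topologicalClosure_minimal _ ?_ (Submodule.isClosed_orthogonal _)
        rintro _ ⟨h, rfl⟩
        exact Submodule.mem_orthogonal_singleton_iff_inner_right.2 (hxV _ _ e he)
      exact Submodule.mem_orthogonal_singleton_iff_inner_right.1 (this hp)
    have hyP : adjoint Pi y = 0 := by rw [hyx, map_sub, hxP, hpP, sub_zero]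
    have hyPi : ∀ h, inner ℂ (Pi h) y = 0 := fun h => by
      rw [← adjoint_inner_right, hyP, inner_zero_right]
    have hyV : ∀ k, inner ℂ (V1 (V2 k)) y = 0 := by
      intro k
      have h1 : inner ℂ (V1 (V2 (k - Pi (adjoint Pi k)))) y = 0 := by
        have he : adjoint Pi (k - Pi (adjoint Pi k)) = 0 := by rw [map_sub, hP, sub_self]
        rw [hyx, inner_sub_right, hxV _ _ _ he, hpV _ he, sub_zero]
      have h2 : inner ℂ (V1 (V2 (Pi (adjoint Pi k)))) y = 0 := by
        have h3 : V1 (V2 (Pi (adjoint Pi k))) =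
            Λ (adjoint Pi k) + Pi (T1 (T2 (adjoint Pi k))) := by rw [hΛ']; abel
        rw [h3, inner_add_left, hyPi, add_zero]
        exact (Submodule.mem_orthogonal _ _).1 hy _
          (Submodule.le_topologicalClosure _ ⟨_, rfl⟩)
      have h4 : k = (k - Pi (adjoint Pi k)) + Pi (adjoint Pi k) := by abel
      rw [h4, map_add, map_add, inner_add_left, h1, h2, add_zero]
    have hy0 : y = 0 := by
      rw [IsStronglyMinimalLift, Submodule.dense_iff_topologicalClosure_eq_top,
        Submodule.topologicalClosure_eq_top_iff, Submodule.eq_bot_iff] at hm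
      refine hm y ((Submodule.mem_orthogonal _ _).2 fun u hu => ?_)
      induction hu using Submodule.span_induction with
      | mem x hx =>
        obtain ⟨n, _, ⟨h, rfl⟩, rfl⟩ := Set.mem_iUnion.1 hx
        cases n with
        | zero => exact hyPi h
        | succ n =>
          rw [pow_succ']
          exact hyV _
      | zero => exact inner_zero_left _
      | add u v _ _ hu hv => rw [inner_add_left, hu, hv, add_zero]
      | smul c u _ hu => rw [inner_smul_left, hu, mul_zero]
    rw [hxy, hy0, add_zero]
    exact hp
  rw [← closure_prod_eq]
  refine subset_antisymm (closure_mono ?_) (closure_minimal ?_ isClosed_closure)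
  · rintro _ ⟨h, rfl⟩
    exact ⟨⟨_, rfl⟩, ⟨_, rfl⟩⟩
  · rintro ⟨_, _⟩ ⟨⟨a, rfl⟩, ⟨b, rfl⟩⟩
    rw [Metric.mem_closure_iff]
    intro ε hε
    have hab : Δ1 a + V1 (Δ2 b) ∈ closure (Set.range Λ) := hclos a b
    obtain ⟨_, ⟨h, rfl⟩, hlt⟩ := Metric.mem_closure_iff.1 hab ε hε
    refine ⟨_, ⟨h, rfl⟩, ?_⟩
    have hdiff : Δ1 a + V1 (Δ2 b) - Λ h = Δ1 (a - T2 h) + V1 (Δ2 (b - h)) := by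
      rw [hΛ]; simp only [map_sub]; abel
    have hn := hxn (a - T2 h) (b - h)
    rw [← hdiff, ← dist_eq_norm] at hn
    rw [Prod.dist_eq, max_lt_iff, dist_eq_norm, dist_eq_norm]
    change ‖D1 a - D1 (T2 h)‖ < ε ∧ ‖D2 b - D2 h‖ < ε
    rw [← map_sub, ← map_sub]
    constructor <;> refine lt_of_le_of_lt ?_ hlt <;>
      refine le_of_sq_le_sq ?_ dist_nonneg <;> rw [hn] <;> simp

end Regularity

/-! ### The equivalence -/

/-- Density of a pair map in a product of sets, transported to the sets as subtypes. -/
lemma denseRange_codRestrict {H : Type u} [NormedAddCommGroup H] {M N : Set H} {f g : H → H}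
    (hf : ∀ h, f h ∈ M) (hg : ∀ h, g h ∈ N)
    (hd : M ×ˢ N ⊆ closure (Set.range fun h : H => (f h, g h))) :
    DenseRange fun h : H => ((⟨f h, hf h⟩ : M), (⟨g h, hg h⟩ : N)) := by
  rintro ⟨x, y⟩
  have hxy := hd (show ((x : H), (y : H)) ∈ M ×ˢ N from ⟨x.2, y.2⟩)
  rw [Metric.mem_closure_iff] at hxy ⊢
  intro ε hε
  obtain ⟨_, ⟨h, rfl⟩, hlt⟩ := hxy ε hε
  exact ⟨_, ⟨h, rfl⟩, hlt⟩

theorem stmt_14 {H : Type u}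
    [NormedAddCommGroup H] [InnerProductSpace ℂ H] [CompleteSpace H]
    (T1 T2 : H →L[ℂ] H) (h1 : ‖T1‖ ≤ 1) (h2 : ‖T2‖ ≤ 1)
    (hc : T1 ∘L T2 = T2 ∘L T1)
    (D1 : H →L[ℂ] H) (hD1pos : D1.IsPositive)
    (hD1sq : D1 ∘L D1 = 1 - adjoint T1 ∘L T1)
    (D2 : H →L[ℂ] H) (hD2pos : D2.IsPositive)
    (hD2sq : D2 ∘L D2 = 1 - adjoint T2 ∘L T2) :
    HasStronglyMinimalAndoLift T1 T2 ↔
      (closure (Set.range fun h : H => (D1 (T2 h), D2 h)) =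
          closure (Set.range ⇑D1) ×ˢ closure (Set.range ⇑D2) ∧
        closure (Set.range fun h : H => (D2 (T1 h), D1 h)) =
          closure (Set.range ⇑D2) ×ˢ closure (Set.range ⇑D1)) := by
  have hn1 := norm_sq_defect T1 D1 hD1pos hD1sq
  have hn2 := norm_sq_defect T2 D2 hD2pos hD2sq
  constructor
  · rintro ⟨K, _, _, _, Pi, V1, V2, hl, hm⟩
    refine ⟨regular_of_lift hn1 hn2 hl hm, regular_of_lift hn2 hn1 hl.symm ?_⟩
    rw [IsStronglyMinimalLift, ← hl.2.2.2.1]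
    exact hm
  · rintro ⟨hr1, hr2⟩
    let M := (LinearMap.range D1.toLinearMap).topologicalClosure
    let N := (LinearMap.range D2.toLinearMap).topologicalClosure
    have hM : ∀ h, D1 h ∈ M := fun h => subset_closure ⟨h, rfl⟩
    have hN : ∀ h, D2 h ∈ N := fun h => subset_closure ⟨h, rfl⟩
    have : CompleteSpace M := Submodule.isClosed_topologicalClosure _ |>.completeSpace_coe
    have : CompleteSpace N := Submodule.isClosed_topologicalClosure _ |>.completeSpace_coe
    refine hasStronglyMinimalAndoLift_of_dense T1 T2 hc (D1.codRestrict M hM)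
      (D2.codRestrict N hN) hn1 hn2 ?_ ?_
    · exact denseRange_codRestrict (M := M) (N := N) (fun h => hM (T2 h)) hN hr1.ge
    · exact (Homeomorph.prodComm N M).surjective.denseRange.comp
        (denseRange_codRestrict (M := N) (N := M) (fun h => hN (T1 h)) hM hr2.ge)
        (Homeomorph.prodComm N M).continuous
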